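/- (Łojasiewicz inequality, semialgebraic division form) Let V ⊂ ℝᴺ be a locally closed semialgebraic set and φ, ψ : V → ℝ continuous semialgebraic functions such that the zero set of φ in V is contained in the zero set of ψ in V. Then there exist a positive integer n and a continuous semialgebraic function ρ : V → ℝ such that ψⁿ = ρ·φ on V. -/

import Mathlib

open MvPolynomial

/-- A semialgebraic subset of `ℝᴺ`: a finite union of finite intersections of
polynomial equalities and strict inequalities. -/
def IsSemialgebraic {N : ℕ} (S : Set (Fin N → ℝ)) : Prop :=
  ∃ (k l : ℕ) (p : Fin k → Fin l → MvPolynomial (Fin N) ℝ) (σ : Fin k → Fin l → Bool),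
    S = ⋃ i, ⋂ j,
      {x | if σ i j then eval x (p i j) = 0 else 0 < eval x (p i j)}

/-- A function `f` on `V ⊆ ℝᴺ` is semialgebraic if its graph is a semialgebraic
subset of `ℝᴺ⁺¹`. -/
def IsSemialgebraicOn {N : ℕ} (V : Set (Fin N → ℝ)) (f : (Fin N → ℝ) → ℝ) : Prop :=
  IsSemialgebraic {y : Fin (N + 1) → ℝ |
    (fun i : Fin N => y i.castSucc) ∈ V ∧ y (Fin.last N) = f fun i : Fin N => y i.castSucc}


namespace SAlg

/-- An order isomorphism of the line supported in `(a,b)` moving `α` to `γ ≥ α`. -/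
lemma bump_aux (a b α γ : ℝ) (h1 : a < α) (h2 : α ≤ γ) (h3 : γ < b) :
    ∃ k : ℝ ≃o ℝ, k α = γ ∧ ∀ y, y ≤ a ∨ b ≤ y → k y = y := by
  set s1 := (γ - a) / (α - a) with hs1
  set s2 := (b - γ) / (b - α) with hs2
  have hs1' : 1 ≤ s1 := by rw [hs1, le_div_iff₀ (by linarith)]; linarith
  have hs2' : 0 < s2 := div_pos (by linarith) (by linarith)
  have hs2'' : s2 ≤ 1 := by rw [hs2, div_le_iff₀ (by linarith)]; linarith
  set f : ℝ → ℝ := fun y => max y (min (a + (y - a) * s1) (b + (y - b) * s2)) with hf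
  have hid : ∀ y, y ≤ a ∨ b ≤ y → f y = y := by
    intro y hy
    apply max_eq_left
    rcases hy with hy | hy
    · exact (min_le_left _ _).trans (by nlinarith)
    · exact (min_le_right _ _).trans (by nlinarith)
  have hmono : StrictMono f := by
    intro x y hxy
    simp only [hf]
    apply max_lt_max hxy
    apply min_lt_min <;> nlinarith
  have hcont : Continuous f := by fun_prop
  have hsurj : Function.Surjective f := by
    intro v
    have := intermediate_value_Icc (f := f) (a := min v a) (b := max v b)
      ((min_le_left _ _).trans (le_max_left _ _)) hcont.continuousOn
    rw [hid _ (Or.inl (min_le_right _ _)), hid _ (Or.inr (le_max_right _ _))] at this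
    obtain ⟨y, -, hy⟩ := this ⟨min_le_left _ _, le_max_left _ _⟩
    exact ⟨y, hy⟩
  refine ⟨hmono.orderIsoOfSurjective f hsurj, ?_, hid⟩
  show f α = γ
  have e1 : a + (α - a) * s1 = γ := by
    rw [hs1, mul_div_cancel₀ _ (by linarith)]; ring
  have e2 : b + (α - b) * s2 = γ := by
    have : (b - α) ≠ 0 := by linarith
    rw [hs2]; field_simp; ring
  simp only [hf, e1, e2, min_self]
  exact max_eq_right h2

lemma bump (a b α γ : ℝ) (h1 : a < α) (h2 : α < b) (h3 : a < γ) (h4 : γ < b) :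
    ∃ k : ℝ ≃o ℝ, k α = γ ∧ ∀ y, y ≤ a ∨ b ≤ y → k y = y := by
  rcases le_total α γ with h | h
  · exact bump_aux a b α γ h1 h h4
  · obtain ⟨k, hk, hk'⟩ := bump_aux a b γ α h3 h h2
    refine ⟨k.symm, by rw [← hk]; simp, fun y hy => ?_⟩
    rw [OrderIso.symm_apply_eq, hk' y hy]

lemma sign_const {f : ℝ → ℝ} (hf : Continuous f) {a b : ℝ}
    (h : ∀ y ∈ Set.uIcc a b, f y ≠ 0) : SignType.sign (f a) = SignType.sign (f b) := by
  have := intermediate_value_uIcc (f := f) (a := a) (b := b) hf.continuousOn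
  have ha := h a Set.left_mem_uIcc
  have hb := h b Set.right_mem_uIcc
  by_contra hne
  have h0 : (0 : ℝ) ∈ Set.uIcc (f a) (f b) := by
    rw [Set.mem_uIcc]
    rcases lt_or_gt_of_ne ha with h1 | h1 <;> rcases lt_or_gt_of_ne hb with h2 | h2
    · rw [sign_neg h1, sign_neg h2] at hne; exact absurd rfl hne
    · exact Or.inl ⟨h1.le, h2.le⟩
    · exact Or.inr ⟨h2.le, h1.le⟩
    · rw [sign_pos h1, sign_pos h2] at hne; exact absurd rfl hne
  obtain ⟨y, hy, hy0⟩ := this h0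
  exact h y hy hy0

/-- Matching of signs on one interval, increasing case. -/
lemma gap_mono {f g : ℝ → ℝ} (hf : Continuous f) (hg : Continuous g) {a b : ℝ} (hab : a < b)
    (ha : SignType.sign (f a) = SignType.sign (g a))
    (hb : SignType.sign (f b) = SignType.sign (g b))
    (mf : StrictMonoOn f (Set.Icc a b)) (mg : StrictMonoOn g (Set.Icc a b)) :
    ∃ k : ℝ ≃o ℝ, (∀ y, y ≤ a ∨ b ≤ y → k y = y) ∧
      ∀ y ∈ Set.Icc a b, SignType.sign (f y) = SignType.sign (g (k y)) := by
  have la : a ∈ Set.Icc a b := ⟨le_rfl, hab.le⟩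
  have lb : b ∈ Set.Icc a b := ⟨hab.le, le_rfl⟩
  have triv : (∀ y ∈ Set.Ioo a b, SignType.sign (f y) = SignType.sign (g y)) →
      ∃ k : ℝ ≃o ℝ, (∀ y, y ≤ a ∨ b ≤ y → k y = y) ∧
      ∀ y ∈ Set.Icc a b, SignType.sign (f y) = SignType.sign (g (k y)) := by
    intro h
    refine ⟨OrderIso.refl ℝ, fun _ _ => rfl, fun y hy => ?_⟩
    rcases eq_or_lt_of_le hy.1 with h1 | h1
    · subst h1; exact ha
    rcases eq_or_lt_of_le hy.2 with h2 | h2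
    · subst h2; exact hb
    exact h y ⟨h1, h2⟩
  rcases le_or_gt 0 (f a) with h1 | h1
  · apply triv
    intro y hy
    have h1' : 0 ≤ g a := by rw [← sign_nonneg_iff, ← ha, sign_nonneg_iff]; exact h1
    have hy' : y ∈ Set.Icc a b := ⟨hy.1.le, hy.2.le⟩
    rw [sign_pos (h1.trans_lt (mf la hy' hy.1)), sign_pos (h1'.trans_lt (mg la hy' hy.1))]
  rcases le_or_gt (f b) 0 with h2 | h2
  · apply triv
    intro y hy
    have h1' : g b ≤ 0 := by rw [← sign_nonpos_iff, ← hb, sign_nonpos_iff]; exact h2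
    have hy' : y ∈ Set.Icc a b := ⟨hy.1.le, hy.2.le⟩
    rw [sign_neg ((mf hy' lb hy.2).trans_le h2), sign_neg ((mg hy' lb hy.2).trans_le h1')]
  have h1' : g a < 0 := by rw [← sign_eq_neg_one_iff, ← ha, sign_eq_neg_one_iff]; exact h1
  have h2' : 0 < g b := by rw [← sign_eq_one_iff, ← hb, sign_eq_one_iff]; exact h2
  obtain ⟨α, hα, hα0⟩ := intermediate_value_Ioo hab.le hf.continuousOn ⟨h1, h2⟩
  obtain ⟨γ, hγ, hγ0⟩ := intermediate_value_Ioo hab.le hg.continuousOn ⟨h1', h2'⟩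
  obtain ⟨k, hk, hk'⟩ := bump a b α γ hα.1 hα.2 hγ.1 hγ.2
  refine ⟨k, hk', fun y hy => ?_⟩
  have hα' : α ∈ Set.Icc a b := ⟨hα.1.le, hα.2.le⟩
  have hγ' : γ ∈ Set.Icc a b := ⟨hγ.1.le, hγ.2.le⟩
  have hky : k y ∈ Set.Icc a b := by
    constructor
    · rw [← hk' a (Or.inl le_rfl)]; exact k.monotone hy.1
    · rw [← hk' b (Or.inr le_rfl)]; exact k.monotone hy.2
  rcases lt_trichotomy y α with h | h | h
  · have i1 := mf hy hα' h
    have i2 := mg hky hγ' (by rw [← hk]; exact k.strictMono h)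
    rw [hα0] at i1; rw [hγ0] at i2
    rw [sign_neg i1, sign_neg i2]
  · subst h; rw [hk, hα0, hγ0]
  · have i1 := mf hα' hy h
    have i2 := mg hγ' hky (by rw [← hk]; exact k.strictMono h)
    rw [hα0] at i1; rw [hγ0] at i2
    rw [sign_pos i1, sign_pos i2]

lemma gap {f g : ℝ → ℝ} (hf : Continuous f) (hg : Continuous g) {a b : ℝ} (hab : a < b)
    (ha : SignType.sign (f a) = SignType.sign (g a))
    (hb : SignType.sign (f b) = SignType.sign (g b))
    (m : (StrictMonoOn f (Set.Icc a b) ∧ StrictMonoOn g (Set.Icc a b)) ∨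
      (StrictAntiOn f (Set.Icc a b) ∧ StrictAntiOn g (Set.Icc a b))) :
    ∃ k : ℝ ≃o ℝ, (∀ y, y ≤ a ∨ b ≤ y → k y = y) ∧
      ∀ y ∈ Set.Icc a b, SignType.sign (f y) = SignType.sign (g (k y)) := by
  rcases m with ⟨m1, m2⟩ | ⟨m1, m2⟩
  · exact gap_mono hf hg hab ha hb m1 m2
  · obtain ⟨k, hk, hk'⟩ := gap_mono hf.neg hg.neg hab
      (by simp only [Pi.neg_apply, Left.sign_neg, ha]) (by simp only [Pi.neg_apply, Left.sign_neg, hb]) m1.neg m2.neg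
    refine ⟨k, hk, fun y hy => ?_⟩
    have := hk' y hy
    simpa only [Pi.neg_apply, Left.sign_neg, neg_inj] using this

lemma gaps {f g : ℝ → ℝ} (hf : Continuous f) (hg : Continuous g) (Z : Finset ℝ)
    (hZ : ∀ z ∈ Z, SignType.sign (f z) = SignType.sign (g z))
    (m : ∀ a b, a < b → (∀ z ∈ Z, z ∉ Set.Ioo a b) →
      (StrictMonoOn f (Set.Icc a b) ∧ StrictMonoOn g (Set.Icc a b)) ∨
      (StrictAntiOn f (Set.Icc a b) ∧ StrictAntiOn g (Set.Icc a b))) (n : ℕ) :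
    ∀ a b : ℝ, a < b → SignType.sign (f a) = SignType.sign (g a) →
      SignType.sign (f b) = SignType.sign (g b) →
      (Z.filter (fun z => z ∈ Set.Ioo a b)).card ≤ n →
    ∃ k : ℝ ≃o ℝ, (∀ y, y ≤ a ∨ b ≤ y → k y = y) ∧ (∀ z ∈ Z, k z = z) ∧
      ∀ y ∈ Set.Icc a b, SignType.sign (f y) = SignType.sign (g (k y)) := by
  classical
  induction n with
  | zero =>
    intro a b hab ha hb hc
    have h0 : ∀ z ∈ Z, z ∉ Set.Ioo a b := by
      rw [Nat.le_zero, Finset.card_eq_zero, Finset.filter_eq_empty_iff] at hc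
      exact hc
    obtain ⟨k, hk, hk'⟩ := gap hf hg hab ha hb (m a b hab h0)
    refine ⟨k, hk, fun z hz => hk z ?_, hk'⟩
    have := h0 z hz
    simp only [Set.mem_Ioo, not_and, not_lt] at this
    rcases le_or_gt z a with h | h
    · exact Or.inl h
    · exact Or.inr (this h)
  | succ n ih =>
    intro a b hab ha hb hc
    by_cases h0 : ∀ z ∈ Z, z ∉ Set.Ioo a b
    · apply ih a b hab ha hb
      rw [Finset.filter_eq_empty_iff.2 (by exact fun {x} hx => h0 x hx)]; simp
    push Not at h0
    obtain ⟨c, hcZ, hc1, hc2⟩ := h0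
    obtain ⟨k1, h11, h12, h13⟩ := ih a c hc1 ha (hZ c hcZ) (by
      refine Nat.le_of_lt_succ (lt_of_lt_of_le (Finset.card_lt_card ?_) hc)
      rw [Finset.ssubset_iff_of_subset]
      · exact ⟨c, by simp [hcZ, hc1, hc2], by simp⟩
      · intro z; simp only [Finset.mem_filter, Set.mem_Ioo]
        rintro ⟨hz, h1, h2⟩; exact ⟨hz, h1, h2.trans hc2⟩)
    obtain ⟨k2, h21, h22, h23⟩ := ih c b hc2 (hZ c hcZ) hb (by
      refine Nat.le_of_lt_succ (lt_of_lt_of_le (Finset.card_lt_card ?_) hc)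
      rw [Finset.ssubset_iff_of_subset]
      · exact ⟨c, by simp [hcZ, hc1, hc2], by simp⟩
      · intro z; simp only [Finset.mem_filter, Set.mem_Ioo]
        rintro ⟨hz, h1, h2⟩; exact ⟨hz, hc1.trans h1, h2⟩)
    refine ⟨k2.trans k1, ?_, ?_, ?_⟩
    · rintro y (hy | hy)
      · simp only [OrderIso.trans_apply]
        rw [h21 y (Or.inl (hy.trans hc1.le)), h11 y (Or.inl hy)]
      · simp only [OrderIso.trans_apply]
        rw [h21 y (Or.inr hy), h11 y (Or.inr (hc2.le.trans hy))]
    · intro z hz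
      simp only [OrderIso.trans_apply]
      rw [h22 z hz, h12 z hz]
    · intro y hy
      simp only [OrderIso.trans_apply]
      rcases le_total y c with h | h
      · rw [h21 y (Or.inl h)]; exact h13 y ⟨hy.1, h⟩
      · have : c ≤ k2 y := by
          rw [← h21 c (Or.inl le_rfl)]; exact k2.monotone h
        rw [h11 _ (Or.inr this)]; exact h23 y ⟨h, hy.2⟩

open Filter in
lemma match_signs {f g : ℝ → ℝ} (hf : Continuous f) (hg : Continuous g) (Z : Finset ℝ)
    (hZ : ∀ z ∈ Z, SignType.sign (f z) = SignType.sign (g z))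
    (m : ∀ a b, a < b → (∀ z ∈ Z, z ∉ Set.Ioo a b) →
      (StrictMonoOn f (Set.Icc a b) ∧ StrictMonoOn g (Set.Icc a b)) ∨
      (StrictAntiOn f (Set.Icc a b) ∧ StrictAntiOn g (Set.Icc a b)))
    (ht : ∀ᶠ y in atTop, SignType.sign (f y) = SignType.sign (g y))
    (hb : ∀ᶠ y in atBot, SignType.sign (f y) = SignType.sign (g y)) :
    ∃ k : ℝ ≃o ℝ, (∀ z ∈ Z, k z = z) ∧
      ∀ y, SignType.sign (f y) = SignType.sign (g (k y)) := by
  obtain ⟨T, hT⟩ := eventually_atTop.1 ht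
  obtain ⟨B, hB⟩ := eventually_atBot.1 hb
  have hlt : min B 0 < max T 1 :=
    lt_of_le_of_lt (min_le_right _ _) (lt_of_lt_of_le one_pos (le_max_right _ _))
  obtain ⟨k, h1, h2, h3⟩ := gaps hf hg Z hZ m _ (min B 0) (max T 1) hlt
    (hB _ (min_le_left _ _)) (hT _ (le_max_left _ _)) le_rfl
  refine ⟨k, h2, fun y => ?_⟩
  rcases le_total y (min B 0) with h | h
  · rw [h1 y (Or.inl h)]; exact hB _ (h.trans (min_le_left _ _))
  rcases le_total (max T 1) y with h' | h'
  · rw [h1 y (Or.inr h')]; exact hT _ ((le_max_left _ _).trans h')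
  exact h3 y ⟨h, h'⟩

end SAlg

namespace SAlg

open Polynomial in
lemma pdiv {R : Type*} [CommRing R] (q : R[X]) (n : ℕ) :
    ∀ p : R[X], (∀ i, n ≤ i → p.coeff i = 0) → q ≠ 0 →
    ∃ (m : ℕ) (k r : R[X]), Polynomial.C (q.leadingCoeff ^ m) * p = q * k + r ∧ r.degree < q.degree := by
  induction n with
  | zero =>
    intro p hp hq
    have : p = 0 := by ext i; simp [hp i (Nat.zero_le _)]
    exact ⟨0, 0, 0, by simp [this], by simpa [bot_lt_iff_ne_bot] using hq⟩
  | succ n ih =>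
    intro p hp hq
    by_cases hlt : n < q.natDegree
    · refine ⟨0, 0, p, by simp, ?_⟩
      rw [degree_eq_natDegree hq, degree_lt_iff_coeff_zero]
      intro i hi
      exact hp i (by omega)
    push Not at hlt
    obtain ⟨m, k, r, h1, h2⟩ := ih (Polynomial.C q.leadingCoeff * p - Polynomial.C (p.coeff n) * (q * Polynomial.X ^ (n - q.natDegree)))
      (by
        intro i hi
        rw [Polynomial.coeff_sub, Polynomial.coeff_C_mul, Polynomial.coeff_C_mul, coeff_mul_X_pow', if_pos (by omega)]
        rcases eq_or_lt_of_le hi with h | h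
        · subst h
          rw [show n - (n - q.natDegree) = q.natDegree by omega]
          simp only [leadingCoeff]; ring
        · rw [hp i h, coeff_eq_zero_of_natDegree_lt (p := q) (by omega)]; simp) hq
    refine ⟨m + 1, k + Polynomial.C (q.leadingCoeff ^ m * p.coeff n) * Polynomial.X ^ (n - q.natDegree), r, ?_, h2⟩
    rw [pow_succ, Polynomial.C_mul, Polynomial.C_mul]
    linear_combination h1

open Polynomial Filter in
lemma sign_atTop (A : ℝ[X]) (hd : 0 < A.natDegree) :
    ∀ᶠ y in atTop, SignType.sign (A.eval y) = SignType.sign A.leadingCoeff := by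
  have hA : A ≠ 0 := by rintro rfl; simp at hd
  have hd' : 0 < A.degree := natDegree_pos_iff_degree_pos.1 hd
  rcases lt_or_gt_of_ne (leadingCoeff_ne_zero.2 hA) with h | h
  · have := A.tendsto_atBot_of_leadingCoeff_nonpos hd' h.le
    filter_upwards [this.eventually (eventually_lt_atBot 0)] with y hy
    rw [sign_neg hy, sign_neg h]
  · have := A.tendsto_atTop_of_leadingCoeff_nonneg hd' h.le
    filter_upwards [this.eventually (eventually_gt_atTop 0)] with y hy
    rw [sign_pos hy, sign_pos h]

open Polynomial Filter in
lemma sign_atBot (A : ℝ[X]) (hd : 0 < A.natDegree) :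
    ∀ᶠ y in atBot, SignType.sign (A.eval y) =
      SignType.sign (A.leadingCoeff * (-1) ^ A.natDegree) := by
  have h1 : (A.comp (-Polynomial.X)).natDegree = A.natDegree := by
    rw [natDegree_comp]; simp
  have h2 := sign_atTop (A.comp (-Polynomial.X)) (by rw [h1]; exact hd)
  rw [leadingCoeff_comp (by simp)] at h2
  have h3 := tendsto_neg_atBot_atTop.eventually h2
  filter_upwards [h3] with y hy
  simpa using hy

open Polynomial in
lemma mono_of_deriv (A : ℝ[X]) (a b c : ℝ) (hc : c ∈ Set.Ioo a b)
    (h : ∀ y ∈ Set.Ioo a b, A.derivative.eval y ≠ 0) :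
    (0 < A.derivative.eval c → StrictMonoOn (fun y => A.eval y) (Set.Icc a b)) ∧
    (A.derivative.eval c < 0 → StrictAntiOn (fun y => A.eval y) (Set.Icc a b)) := by
  have key : ∀ y ∈ Set.Ioo a b, SignType.sign (A.derivative.eval y) =
      SignType.sign (A.derivative.eval c) := fun y hy =>
    sign_const (f := fun y => A.derivative.eval y) (by fun_prop)
      (fun w hw => h w (Set.ordConnected_Ioo.uIcc_subset hy hc hw))
  constructor
  · intro h0
    apply strictMonoOn_of_deriv_pos (convex_Icc a b) (by fun_prop)
    intro y hy
    rw [interior_Icc] at hy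
    rw [Polynomial.deriv, ← sign_eq_one_iff, key y hy, sign_pos h0]
  · intro h0
    apply strictAntiOn_of_deriv_neg (convex_Icc a b) (by fun_prop)
    intro y hy
    rw [interior_Icc] at hy
    rw [Polynomial.deriv, ← sign_eq_neg_one_iff, key y hy, sign_neg h0]

open Polynomial in
/-- The specialisations of `q` at `e`, `e'` have the same signs along `h`. -/
def Mt {R : Type*} [CommRing R] (e e' : R →+* ℝ) (h : ℝ ≃o ℝ) (q : R[X]) : Prop :=
  ∀ y, SignType.sign ((q.map e).eval y) = SignType.sign ((q.map e').eval (h y))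

lemma sign_eq_zero_iff_of_eq {a b : ℝ} (h : SignType.sign a = SignType.sign b) :
    a = 0 ↔ b = 0 := by
  rw [← sign_eq_zero_iff, h, sign_eq_zero_iff]

open Polynomial Filter in
lemma core {R : Type*} [CommRing R] (e e' : R →+* ℝ) (P0 : Multiset R[X]) (p : R[X])
    (hd : 0 < p.natDegree) (hl : SignType.sign (e p.leadingCoeff) = SignType.sign (e' p.leadingCoeff))
    (hne : e p.leadingCoeff ≠ 0) (h : ℝ ≃o ℝ)
    (hP0 : ∀ q ∈ P0, Mt e e' h q) (hp' : Mt e e' h p.derivative)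
    (hq0 : ∀ q ∈ P0, q.map e ≠ 0)
    (hZ : ∀ z, ((∃ q ∈ P0, (q.map e).eval z = 0) ∨ (p.derivative.map e).eval z = 0) →
      SignType.sign ((p.map e).eval z) = SignType.sign ((p.map e').eval (h z))) :
    ∃ h' : ℝ ≃o ℝ, ∀ q ∈ p ::ₘ P0, Mt e e' h' q := by
  have hne' : e' p.leadingCoeff ≠ 0 := fun h0 => hne ((sign_eq_zero_iff_of_eq hl).2 h0)
  have nd : (p.map e).natDegree = p.natDegree := natDegree_map_of_leadingCoeff_ne_zero e hne
  have nd' : (p.map e').natDegree = p.natDegree := natDegree_map_of_leadingCoeff_ne_zero e' hne'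
  have lc : (p.map e).leadingCoeff = e p.leadingCoeff := leadingCoeff_map_of_leadingCoeff_ne_zero e hne
  have lc' : (p.map e').leadingCoeff = e' p.leadingCoeff :=
    leadingCoeff_map_of_leadingCoeff_ne_zero e' hne'
  have hder0 : (p.derivative.map e) ≠ 0 := by
    rw [← derivative_map]
    intro h0
    have := derivative_eq_zero.1 h0
    omega
  have hprod : (p.derivative.map e) * (P0.map (fun q => q.map e)).prod ≠ 0 := by
    apply mul_ne_zero hder0
    apply Multiset.prod_ne_zero
    simp only [Multiset.mem_map, not_exists, not_and]
    exact fun q hq => hq0 q hq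
  set Q := (p.derivative.map e) * (P0.map (fun q => q.map e)).prod with hQ
  have memZ : ∀ z, z ∈ Q.roots.toFinset ↔
      ((∃ q ∈ P0, (q.map e).eval z = 0) ∨ (p.derivative.map e).eval z = 0) := by
    intro z
    rw [Multiset.mem_toFinset, mem_roots hprod, IsRoot.def, hQ, Polynomial.eval_mul, eval_multiset_prod,
      mul_eq_zero, Multiset.prod_eq_zero_iff]
    simp only [Multiset.map_map, Multiset.mem_map, Function.comp]
    exact or_comm
  have hhc : Continuous h := h.continuous
  obtain ⟨k, hk1, hk2⟩ := match_signs (f := fun y => (p.map e).eval y)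
    (g := fun y => (p.map e').eval (h y)) (by fun_prop) (by fun_prop) Q.roots.toFinset
    (fun z hz => hZ z ((memZ z).1 hz))
    (by
      intro a b hab hno
      have hd1 : ∀ y ∈ Set.Ioo a b, (p.map e).derivative.eval y ≠ 0 := by
        intro y hy h0
        rw [derivative_map] at h0
        exact hno y ((memZ y).2 (Or.inr h0)) hy
      have hd2 : ∀ y ∈ Set.Ioo (h a) (h b), (p.map e').derivative.eval y ≠ 0 := by
        intro y hy h0
        rw [derivative_map] at h0
        have h1 := hp' (h.symm y)
        rw [h.apply_symm_apply, h0, sign_zero, sign_eq_zero_iff] at h1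
        refine hno _ ((memZ _).2 (Or.inr h1)) ⟨?_, ?_⟩
        · exact h.lt_symm_apply.2 hy.1
        · exact h.symm_apply_lt.2 hy.2
      obtain ⟨c, hc⟩ := exists_between hab
      have m1 := mono_of_deriv (p.map e) a b c hc hd1
      have m2 := mono_of_deriv (p.map e') (h a) (h b) (h c) ⟨h.strictMono hc.1, h.strictMono hc.2⟩ hd2
      have hs := hp' c
      rw [← derivative_map, ← derivative_map] at hs
      have hmaps : Set.MapsTo h (Set.Icc a b) (Set.Icc (h a) (h b)) :=
        fun y hy => ⟨h.monotone hy.1, h.monotone hy.2⟩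
      rcases lt_or_gt_of_ne (hd1 c hc) with h0 | h0
      · right
        refine ⟨m1.2 h0, ?_⟩
        rw [sign_neg h0, eq_comm, sign_eq_neg_one_iff] at hs
        exact fun x hx y hy hxy => m2.2 hs (hmaps hx) (hmaps hy) (h.strictMono hxy)
      · left
        refine ⟨m1.1 h0, ?_⟩
        rw [sign_pos h0, eq_comm, sign_eq_one_iff] at hs
        exact fun x hx y hy hxy => m2.1 hs (hmaps hx) (hmaps hy) (h.strictMono hxy))
    (by
      filter_upwards [sign_atTop (p.map e) (by omega),
        h.tendsto_atTop.eventually (sign_atTop (p.map e') (by omega))] with y h1 h2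
      rw [h1, h2, lc, lc', hl])
    (by
      filter_upwards [sign_atBot (p.map e) (by omega),
        h.tendsto_atBot.eventually (sign_atBot (p.map e') (by omega))] with y h1 h2
      rw [h1, h2, lc, lc', nd, nd', sign_mul, sign_mul, hl])
  refine ⟨k.trans h, fun q hq y => ?_⟩
  rw [Multiset.mem_cons] at hq
  rcases hq with rfl | hq
  · exact hk2 y
  · rw [OrderIso.trans_apply, ← hP0 q hq (k y)]
    by_cases hfix : k y = y
    · rw [hfix]
    apply sign_const (f := fun y => (q.map e).eval y) (by fun_prop)
    intro z hz h0
    have hkz := hk1 z ((memZ z).2 (Or.inl ⟨q, hq, h0⟩))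
    apply hfix
    rw [Set.mem_uIcc] at hz
    rcases hz with ⟨h1, h2⟩ | ⟨h1, h2⟩
    · have h3 := k.monotone h1
      rw [hkz] at h3
      have h4 : k y = k z := by rw [hkz]; exact le_antisymm h3 h2
      have h5 := k.injective h4
      rw [h5, hkz]
    · have h3 := k.monotone h2
      rw [hkz] at h3
      have h4 : k y = k z := by rw [hkz]; exact le_antisymm h1 h3
      have h5 := k.injective h4
      rw [h5, hkz]

end SAlg

namespace SAlg

open Polynomial in
/-- Quantifier elimination, sign form. -/
theorem qe {R : Type*} [CommRing R] (P : Multiset R[X]) :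
    ∃ F : Set R, F.Finite ∧ ∀ e e' : R →+* ℝ,
      (∀ f ∈ F, SignType.sign (e f) = SignType.sign (e' f)) →
      ∃ h : ℝ ≃o ℝ, ∀ q ∈ P, Mt e e' h q := by
  classical
  have wf : WellFounded (fun P P' : Multiset R[X] =>
      Multiset.IsDershowitzMannaLT (P.map degree) (P'.map degree)) :=
    InvImage.wf (fun P : Multiset R[X] => P.map degree)
      (Multiset.wellFounded_isDershowitzMannaLT (α := WithBot ℕ))
  induction P using wf.induction with
  | _ P ih =>
  -- replacement of one element by finitely many of lower degree
  have red : ∀ (p : R[X]) (P0 S : Multiset R[X]), P = p ::ₘ P0 → (∀ s ∈ S, s.degree < p.degree) →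
      ∃ F : Set R, F.Finite ∧ ∀ e e' : R →+* ℝ,
      (∀ f ∈ F, SignType.sign (e f) = SignType.sign (e' f)) →
      ∃ h : ℝ ≃o ℝ, ∀ q ∈ P0 + S, Mt e e' h q := by
    intro p P0 S hP hS
    apply ih
    refine ⟨P0.map degree, S.map degree, {p.degree}, by simp, by simp, ?_, ?_⟩
    · rw [hP, Multiset.map_cons, add_comm, Multiset.singleton_add]
    · intro y hy
      obtain ⟨s, hs, rfl⟩ := Multiset.mem_map.1 hy
      exact ⟨p.degree, by simp, hS s hs⟩
  by_cases h0 : (0 : R[X]) ∈ P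
  · obtain ⟨P0, hP0⟩ := Multiset.exists_cons_of_mem h0
    obtain ⟨F, hF, hF'⟩ := red 0 P0 0 hP0 (by simp)
    refine ⟨F, hF, fun e e' hee => ?_⟩
    obtain ⟨h, hh⟩ := hF' e e' hee
    refine ⟨h, fun q hq => ?_⟩
    rw [hP0, Multiset.mem_cons] at hq
    rcases hq with rfl | hq
    · intro y; simp
    · exact hh q (by simpa using hq)
  have hne : ∀ q ∈ P, q ≠ 0 := fun q hq h => h0 (h ▸ hq)
  by_cases hconst : ∀ q ∈ P, q.natDegree = 0
  · refine ⟨(fun q : R[X] => q.coeff 0) '' {q | q ∈ P}, ?_, fun e e' hee => ⟨OrderIso.refl ℝ, ?_⟩⟩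
    · apply Set.Finite.image
      exact (Multiset.toFinset P).finite_toSet.subset (fun q hq => by simpa using hq)
    · intro q hq y
      rw [eq_C_of_natDegree_eq_zero (hconst q hq)]
      simp only [Polynomial.map_C, Polynomial.eval_C]
      exact hee _ ⟨q, hq, rfl⟩
  push Not at hconst
  obtain ⟨q1, hq1, hq1d⟩ := hconst
  obtain ⟨p, hpP, hpmax⟩ : ∃ p ∈ P, ∀ q ∈ P, q.natDegree ≤ p.natDegree := by
    obtain ⟨p, hp, hp'⟩ := Finset.exists_max_image P.toFinset natDegree ⟨q1, by simpa using hq1⟩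
    exact ⟨p, by simpa using hp, fun q hq => hp' q (by simpa using hq)⟩
  have hpd : 0 < p.natDegree := lt_of_lt_of_le (Nat.pos_of_ne_zero hq1d) (hpmax q1 hq1)
  obtain ⟨P0, hP0⟩ := Multiset.exists_cons_of_mem hpP
  -- pseudo-remainders
  have rem : ∀ q : R[X], ∃ r : R[X], q ≠ 0 → ∃ (m : ℕ) (k : R[X]),
      Polynomial.C (q.leadingCoeff ^ m) * p = q * k + r ∧ r.degree < q.degree := by
    intro q
    by_cases hq : q = 0
    · exact ⟨0, fun h => absurd hq h⟩
    · obtain ⟨m, k, r, h1, h2⟩ := pdiv q (p.natDegree + 1) p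
        (fun i hi => coeff_eq_zero_of_natDegree_lt (by omega)) hq
      exact ⟨r, fun _ => ⟨m, k, h1, h2⟩⟩
  choose rm hrm using rem
  have hmem0 : ∀ q ∈ P0, q ∈ P := fun q hq => by rw [hP0]; exact Multiset.mem_cons_of_mem hq
  have hp0 : p ≠ 0 := hne p hpP
  -- the main replacement; the derivative may vanish in positive characteristic
  set S : Multiset R[X] := p.derivative ::ₘ
    ((if p.derivative = 0 then 0 else {rm p.derivative}) + P0.map rm) with hS
  obtain ⟨F1, hF1, hF1'⟩ := red p P0 S hP0 (by
    intro s hs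
    rw [hS, Multiset.mem_cons, Multiset.mem_add] at hs
    rcases hs with rfl | hs | hs
    · exact degree_derivative_lt hp0
    · split_ifs at hs with hd
      · simp at hs
      · rw [Multiset.mem_singleton] at hs
        subst hs
        obtain ⟨m, k, -, h2⟩ := hrm _ hd
        exact h2.trans (degree_derivative_lt hp0)
    · obtain ⟨q, hq, rfl⟩ := Multiset.mem_map.1 hs
      obtain ⟨m, k, -, h2⟩ := hrm q (hne q (hmem0 q hq))
      exact h2.trans_le (by
        rw [degree_eq_natDegree hp0, degree_eq_natDegree (hne q (hmem0 q hq))]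
        exact_mod_cast hpmax q (hmem0 q hq)))
  have er : ∀ q : R[X], ∃ F : Set R, F.Finite ∧ (q ∈ P → ∀ e e' : R →+* ℝ,
      (∀ f ∈ F, SignType.sign (e f) = SignType.sign (e' f)) →
      ∃ h : ℝ ≃o ℝ, ∀ q' ∈ P.erase q + {q.eraseLead}, Mt e e' h q') := by
    intro q
    by_cases hq : q ∈ P
    · obtain ⟨F, hF, hF'⟩ := red q (P.erase q) {q.eraseLead} (Multiset.cons_erase hq).symm (by
        intro s hs
        rw [Multiset.mem_singleton] at hs
        subst hs
        exact degree_eraseLead_lt (hne q hq))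
      exact ⟨F, hF, fun _ => hF'⟩
    · exact ⟨∅, Set.finite_empty, fun h => absurd h hq⟩
  choose FE hFE hFE' using er
  have finP : {q | q ∈ P}.Finite :=
    (Multiset.toFinset P).finite_toSet.subset (fun q hq => by simpa using hq)
  refine ⟨F1 ∪ leadingCoeff '' {q | q ∈ P} ∪ ⋃ q ∈ {q | q ∈ P}, FE q,
    (hF1.union (finP.image _)).union (finP.biUnion fun q _ => hFE q), fun e e' hee => ?_⟩
  have hee1 : ∀ f ∈ F1, SignType.sign (e f) = SignType.sign (e' f) :=
    fun f hf => hee f (Or.inl (Or.inl hf))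
  have hlc : ∀ q ∈ P, SignType.sign (e q.leadingCoeff) = SignType.sign (e' q.leadingCoeff) :=
    fun q hq => hee _ (Or.inl (Or.inr ⟨q, hq, rfl⟩))
  by_cases hz : ∃ q ∈ P, e q.leadingCoeff = 0
  · obtain ⟨q, hq, hq0⟩ := hz
    have hq0' : e' q.leadingCoeff = 0 := (sign_eq_zero_iff_of_eq (hlc q hq)).1 hq0
    obtain ⟨h, hh⟩ := hFE' q hq e e' (fun f hf => hee f (Or.inr (Set.mem_biUnion hq hf)))
    refine ⟨h, fun q' hq' => ?_⟩
    rw [← Multiset.cons_erase hq, Multiset.mem_cons] at hq'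
    rcases hq' with rfl | hq'
    · have key : ∀ e : R →+* ℝ, e q'.leadingCoeff = 0 → q'.map e = q'.eraseLead.map e := by
        intro e he
        have := congrArg (fun r => r.map e) q'.eraseLead_add_C_mul_X_pow
        simp only [Polynomial.map_add, Polynomial.map_mul, Polynomial.map_C, he] at this
        rw [← this]; simp
      have := hh q'.eraseLead (by simp)
      intro y
      rw [key e hq0, key e' hq0']
      exact this y
    · exact hh q' (by simp [hq'])
  push Not at hz
  obtain ⟨h, hh⟩ := hF1' e e' hee1
  rw [hP0]
  have hder : p.derivative.map e ≠ 0 := by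
    rw [← derivative_map]
    intro h0
    have := derivative_eq_zero.1 h0
    rw [natDegree_map_of_leadingCoeff_ne_zero e (hz p hpP)] at this
    omega
  have hder0 : p.derivative ≠ 0 := by rintro h0; simp [h0] at hder
  have hmap0 : ∀ q ∈ P, q.map e ≠ 0 := by
    intro q hq h0
    apply hz q hq
    have := congrArg (fun r => r.coeff q.natDegree) h0
    simpa using this
  have hdlc : p.derivative.leadingCoeff = p.leadingCoeff * (p.natDegree : R) := by
    have hc : p.derivative.coeff (p.natDegree - 1) = p.leadingCoeff * (p.natDegree : R) := by
      rw [coeff_derivative, Nat.sub_add_cancel hpd, leadingCoeff]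
      congr 1
      rw [← Nat.cast_succ, Nat.succ_eq_add_one, Nat.sub_add_cancel hpd]
    have hcn : p.derivative.coeff (p.natDegree - 1) ≠ 0 := by
      rw [hc]; intro h0
      have := congrArg e h0
      rw [map_mul, map_natCast, map_zero] at this
      exact mul_ne_zero (hz p hpP) (by exact_mod_cast hpd.ne') this
    have : p.derivative.natDegree = p.natDegree - 1 :=
      natDegree_eq_of_le_of_coeff_ne_zero (natDegree_derivative_le p) hcn
    rw [leadingCoeff, this, hc]
  -- signs of p at zeros of q
  have atz : ∀ q : R[X], q ≠ 0 → Mt e e' h q → Mt e e' h (rm q) → e q.leadingCoeff ≠ 0 →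
      SignType.sign (e q.leadingCoeff) = SignType.sign (e' q.leadingCoeff) →
      ∀ z, (q.map e).eval z = 0 →
      SignType.sign ((p.map e).eval z) = SignType.sign ((p.map e').eval (h z)) := by
    intro q hq hm hmr hl0 hl z hz0
    obtain ⟨m, k, h1, -⟩ := hrm q hq
    have hz0' : (q.map e').eval (h z) = 0 := (sign_eq_zero_iff_of_eq (hm z)).1 hz0
    have e1 : e q.leadingCoeff ^ m * (p.map e).eval z = ((rm q).map e).eval z := by
      have := congrArg (fun r => (r.map e).eval z) h1
      simpa [hz0] using this
    have e2 : e' q.leadingCoeff ^ m * (p.map e').eval (h z) = ((rm q).map e').eval (h z) := by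
      have := congrArg (fun r => (r.map e').eval (h z)) h1
      simpa [hz0'] using this
    have e3 := hmr z
    rw [← e1, ← e2, sign_mul, sign_mul, sign_pow, sign_pow, ← hl] at e3
    exact mul_left_cancel₀ (pow_ne_zero _ (by rwa [Ne, sign_eq_zero_iff])) e3
  have hhd : Mt e e' h p.derivative := hh _ (by simp [hS])
  refine core e e' P0 p hpd (hlc p hpP) (hz p hpP) h (fun q hq => hh q (by simp [hq]))
    hhd (fun q hq => hmap0 q (hmem0 q hq)) ?_
  rintro z (⟨q, hq, hq0⟩ | hd)
  · have hqP := hmem0 q hq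
    exact atz q (hne q hqP) (hh q (by simp [hq]))
      (hh _ (by
        rw [hS]
        simp only [Multiset.mem_add, Multiset.mem_cons, Multiset.mem_map]
        exact Or.inr (Or.inr (Or.inr ⟨q, hq, rfl⟩)))) (hz q hqP) (hlc q hqP) z hq0
  · refine atz p.derivative hder0 hhd (hh _ (by simp [hS, hder0])) ?_ ?_ z hd
    · rw [hdlc, map_mul, map_natCast]
      exact mul_ne_zero (hz p hpP) (by exact_mod_cast hpd.ne')
    · rw [hdlc, e.map_mul, e'.map_mul, map_natCast e, map_natCast e', sign_mul, sign_mul, hlc p hpP]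

end SAlg

namespace SAlg

/-- Functions given by polynomials. -/
def IsPoly {ι : Type} (t : (ι → ℝ) → ℝ) : Prop :=
  ∃ p : MvPolynomial ι ℝ, ∀ x, t x = eval x p

lemma IsPoly.coord {ι : Type} (i : ι) : IsPoly (fun x : ι → ℝ => x i) :=
  ⟨MvPolynomial.X i, by simp⟩

lemma IsPoly.const {ι : Type} (c : ℝ) : IsPoly (fun _ : ι → ℝ => c) :=
  ⟨MvPolynomial.C c, by simp⟩

lemma IsPoly.add {ι : Type} {s t : (ι → ℝ) → ℝ} (hs : IsPoly s) (ht : IsPoly t) :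
    IsPoly (fun x => s x + t x) := by
  obtain ⟨p, hp⟩ := hs; obtain ⟨q, hq⟩ := ht
  exact ⟨p + q, by simp [hp, hq]⟩

lemma IsPoly.sub {ι : Type} {s t : (ι → ℝ) → ℝ} (hs : IsPoly s) (ht : IsPoly t) :
    IsPoly (fun x => s x - t x) := by
  obtain ⟨p, hp⟩ := hs; obtain ⟨q, hq⟩ := ht
  exact ⟨p - q, by simp [hp, hq]⟩

lemma IsPoly.mul {ι : Type} {s t : (ι → ℝ) → ℝ} (hs : IsPoly s) (ht : IsPoly t) :
    IsPoly (fun x => s x * t x) := by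
  obtain ⟨p, hp⟩ := hs; obtain ⟨q, hq⟩ := ht
  exact ⟨p * q, by simp [hp, hq]⟩

lemma IsPoly.pow {ι : Type} {s : (ι → ℝ) → ℝ} (hs : IsPoly s) (n : ℕ) :
    IsPoly (fun x => s x ^ n) := by
  obtain ⟨p, hp⟩ := hs
  exact ⟨p ^ n, by simp [hp]⟩

/-- Definable predicates: membership is determined by the signs of finitely many polynomials. -/
def Dfn {ι : Type} (p : (ι → ℝ) → Prop) : Prop :=
  ∃ F : Set (MvPolynomial ι ℝ), F.Finite ∧ ∀ x x' : ι → ℝ,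
    (∀ f ∈ F, SignType.sign (eval x f) = SignType.sign (eval x' f)) → (p x → p x')

lemma Dfn.not {ι : Type} {p : (ι → ℝ) → Prop} (hp : Dfn p) : Dfn (fun x => ¬ p x) := by
  obtain ⟨F, hF, h⟩ := hp
  exact ⟨F, hF, fun x x' hx hn hp => hn (h x' x (fun f hf => (hx f hf).symm) hp)⟩

lemma Dfn.and {ι : Type} {p q : (ι → ℝ) → Prop} (hp : Dfn p) (hq : Dfn q) :
    Dfn (fun x => p x ∧ q x) := by
  obtain ⟨F, hF, h⟩ := hp
  obtain ⟨G, hG, h'⟩ := hq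
  exact ⟨F ∪ G, hF.union hG, fun x x' hx ⟨h1, h2⟩ =>
    ⟨h x x' (fun f hf => hx f (Or.inl hf)) h1, h' x x' (fun f hf => hx f (Or.inr hf)) h2⟩⟩

lemma Dfn.congr {ι : Type} {p q : (ι → ℝ) → Prop} (hp : Dfn p) (h : ∀ x, q x ↔ p x) :
    Dfn q := by
  have : q = p := funext fun x => propext (h x)
  rwa [this]

lemma Dfn.or {ι : Type} {p q : (ι → ℝ) → Prop} (hp : Dfn p) (hq : Dfn q) :
    Dfn (fun x => p x ∨ q x) :=
  (hp.not.and hq.not).not.congr (fun x => by tauto)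

lemma Dfn.imp {ι : Type} {p q : (ι → ℝ) → Prop} (hp : Dfn p) (hq : Dfn q) :
    Dfn (fun x => p x → q x) :=
  (hp.and hq.not).not.congr (fun x => by tauto)

lemma Dfn.iall {ι α : Type} [Finite α] {p : α → (ι → ℝ) → Prop} (hp : ∀ a, Dfn (p a)) :
    Dfn (fun x => ∀ a, p a x) := by
  choose F hF h using hp
  exact ⟨⋃ a, F a, Set.finite_iUnion hF, fun x x' hx h1 a =>
    h a x x' (fun f hf => hx f (Set.mem_iUnion.2 ⟨a, hf⟩)) (h1 a)⟩

lemma Dfn.lt {ι : Type} {s t : (ι → ℝ) → ℝ} (hs : IsPoly s) (ht : IsPoly t) :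
    Dfn (fun x => s x < t x) := by
  obtain ⟨p, hp⟩ := ht.sub hs
  refine ⟨{p}, Set.finite_singleton p, fun x x' hx h => ?_⟩
  have := hx p rfl
  rw [← hp, ← hp, sign_pos (sub_pos.2 h), eq_comm, sign_eq_one_iff, sub_pos] at this
  exact this

lemma Dfn.le {ι : Type} {s t : (ι → ℝ) → ℝ} (hs : IsPoly s) (ht : IsPoly t) :
    Dfn (fun x => s x ≤ t x) :=
  (Dfn.lt ht hs).not.congr (fun _ => not_lt.symm)

lemma Dfn.eq {ι : Type} {s t : (ι → ℝ) → ℝ} (hs : IsPoly s) (ht : IsPoly t) :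
    Dfn (fun x => s x = t x) :=
  ((Dfn.le hs ht).and (Dfn.le ht hs)).congr (fun _ => le_antisymm_iff)

lemma Dfn.subst {ι κ : Type} {p : (κ → ℝ) → Prop} (hp : Dfn p) {t : κ → (ι → ℝ) → ℝ}
    (ht : ∀ k, IsPoly (t k)) : Dfn (fun x => p (fun k => t k x)) := by
  obtain ⟨F, hF, h⟩ := hp
  choose T hT using ht
  have key : ∀ x f, eval x (bind₁ T f) = eval (fun k => t k x) f := by
    intro x f
    rw [← coe_aeval_eq_eval, ← coe_aeval_eq_eval]
    simp only [RingHom.coe_coe, aeval_bind₁]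
    congr 2
    funext k
    rw [hT, ← coe_aeval_eq_eval]; rfl
  refine ⟨(fun f => bind₁ T f) '' F, hF.image _, fun x x' hx => h _ _ (fun f hf => ?_)⟩
  rw [← key, ← key]
  exact hx _ ⟨f, hf, rfl⟩

lemma eval_option {ι : Type} (f : MvPolynomial (Option ι) ℝ) (x : ι → ℝ) (y : ℝ) :
    eval (fun o => Option.elim o y x) f =
      (((optionEquivLeft ℝ ι f).map (eval x)).eval y) := by
  induction f using MvPolynomial.induction_on with
  | C a => simp
  | add p q hp hq => simp [hp, hq]
  | mul_X p i hp =>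
    rw [eval_mul, hp]
    cases i <;> simp

/-- Tarski–Seidenberg: projection along one coordinate. -/
theorem Dfn.ex1 {ι : Type} {p : (ι → ℝ) → ℝ → Prop}
    (hp : Dfn (fun v : Option ι → ℝ => p (fun i => v (some i)) (v none))) :
    Dfn (fun x => ∃ y, p x y) := by
  obtain ⟨F, hF, h⟩ := hp
  obtain ⟨G, hG, hG'⟩ := qe (hF.toFinset.val.map (fun f => optionEquivLeft ℝ ι f))
  refine ⟨G, hG, fun x x' hx ⟨y, hy⟩ => ?_⟩
  obtain ⟨k, hk⟩ := hG' (eval x) (eval x') hx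
  refine ⟨k y, h (fun o => Option.elim o y x) (fun o => Option.elim o (k y) x') ?_ hy⟩
  intro f hf
  rw [eval_option, eval_option]
  exact hk _ (Multiset.mem_map.2 ⟨f, by simpa using hf, rfl⟩) y

theorem Dfn.all1 {ι : Type} {p : (ι → ℝ) → ℝ → Prop}
    (hp : Dfn (fun v : Option ι → ℝ => p (fun i => v (some i)) (v none))) :
    Dfn (fun x => ∀ y, p x y) :=
  (Dfn.ex1 (p := fun x y => ¬ p x y) hp.not).not.congr (fun x => by simp)

theorem Dfn.exN {N : ℕ} : ∀ {ι : Type} {p : (ι → ℝ) → (Fin N → ℝ) → Prop},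
    Dfn (fun v : ι ⊕ Fin N → ℝ => p (fun i => v (Sum.inl i)) (fun i => v (Sum.inr i))) →
    Dfn (fun x => ∃ y, p x y) := by
  induction N with
  | zero =>
    intro ι p hp
    have := hp.subst (ι := ι) (t := fun k x => Sum.elim x Fin.elim0 k) (by
      rintro (i | i)
      · exact IsPoly.coord i
      · exact i.elim0)
    refine this.congr (fun x => ?_)
    constructor
    · rintro ⟨y, hy⟩
      obtain rfl : y = fun i => Fin.elim0 i := Subsingleton.elim _ _
      exact hy
    · intro hy; exact ⟨_, hy⟩
  | succ n ih =>
    intro ι p hp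
    have h1 : Dfn (fun x => ∃ y0 : ℝ, ∃ y : Fin n → ℝ, p x (Fin.cons y0 y)) := by
      apply Dfn.ex1
      apply ih (p := fun (v : Option ι → ℝ) y => p (fun i => v (some i)) (Fin.cons (v none) y))
      have h2 := hp.subst (ι := Option ι ⊕ Fin n)
        (t := fun k v => Sum.elim (fun i => v (Sum.inl (some i)))
          (fun i => (Fin.cons (v (Sum.inl none)) (fun j => v (Sum.inr j)) : Fin (n + 1) → ℝ) i) k) (by
        rintro (i | i)
        · exact IsPoly.coord _
        · refine Fin.cases ?_ (fun j => ?_) i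
          · exact IsPoly.coord _
          · exact IsPoly.coord _)
      exact h2
    refine h1.congr (fun x => ?_)
    constructor
    · rintro ⟨y, hy⟩
      exact ⟨y 0, Fin.tail y, by rwa [Fin.cons_self_tail]⟩
    · rintro ⟨y0, y, hy⟩; exact ⟨_, hy⟩

theorem Dfn.allN {N : ℕ} {ι : Type} {p : (ι → ℝ) → (Fin N → ℝ) → Prop}
    (hp : Dfn (fun v : ι ⊕ Fin N → ℝ => p (fun i => v (Sum.inl i)) (fun i => v (Sum.inr i)))) :
    Dfn (fun x => ∀ y, p x y) :=
  (Dfn.exN (p := fun x y => ¬ p x y) hp.not).not.congr (fun x => by simp)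

lemma dfn_of_sa {N : ℕ} {S : Set (Fin N → ℝ)} (hS : IsSemialgebraic S) : Dfn (fun x => x ∈ S) := by
  obtain ⟨k, l, p, σ, rfl⟩ := hS
  refine ⟨⋃ i, ⋃ j, {p i j}, Set.finite_iUnion fun i => Set.finite_iUnion fun j =>
    Set.finite_singleton _, fun x x' hx h => ?_⟩
  simp only [Set.mem_iUnion, Set.mem_iInter, Set.mem_ofPred_eq] at h ⊢
  obtain ⟨i, hi⟩ := h
  refine ⟨i, fun j => ?_⟩
  have h1 := hi j
  have h2 := hx (p i j) (by simp only [Set.mem_iUnion]; exact ⟨i, j, rfl⟩)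
  split_ifs at h1 ⊢ with hs
  · exact (sign_eq_zero_iff_of_eq h2).1 h1
  · rwa [← sign_eq_one_iff, ← h2, sign_eq_one_iff]

lemma sa_of_dfn {N : ℕ} {S : Set (Fin N → ℝ)} (hS : Dfn (fun x => x ∈ S)) : IsSemialgebraic S := by
  classical
  obtain ⟨F, hF, h⟩ := hS
  have := hF.fintype
  let l := Fintype.card F
  let ef : F ≃ Fin l := Fintype.equivFin F
  let pat : (Fin N → ℝ) → (Fin l → SignType) :=
    fun x j => SignType.sign (eval x (ef.symm j : MvPolynomial (Fin N) ℝ))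
  let T := {τ : Fin l → SignType // ∃ x ∈ S, pat x = τ}
  let k := Fintype.card T
  let eT : T ≃ Fin k := Fintype.equivFin T
  refine ⟨k, l, fun i j => if (eT.symm i).1 j = -1 then - (ef.symm j : MvPolynomial (Fin N) ℝ)
    else (ef.symm j : MvPolynomial (Fin N) ℝ), fun i j => decide ((eT.symm i).1 j = 0), ?_⟩
  have key : ∀ (x : Fin N → ℝ) i, (∀ j, (if decide ((eT.symm i).1 j = 0) = true then
      eval x (if (eT.symm i).1 j = -1 then - (ef.symm j : MvPolynomial (Fin N) ℝ)
        else (ef.symm j : MvPolynomial (Fin N) ℝ)) = 0 else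
      0 < eval x (if (eT.symm i).1 j = -1 then - (ef.symm j : MvPolynomial (Fin N) ℝ)
        else (ef.symm j : MvPolynomial (Fin N) ℝ))) ↔ pat x j = (eT.symm i).1 j) := by
    intro x i j
    simp only [pat]
    generalize (eT.symm i).1 j = τ
    cases τ
    · simp [sign_eq_zero_iff]
    · simp [sign_eq_neg_one_iff]
    · simp [sign_eq_one_iff]
  ext x
  simp only [Set.mem_iUnion, Set.mem_iInter, Set.mem_ofPred_eq, key]
  constructor
  · intro hx
    exact ⟨eT ⟨pat x, x, hx, rfl⟩, fun j => by simp⟩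
  · rintro ⟨i, hi⟩
    obtain ⟨x0, hx0, hp⟩ := (eT.symm i).2
    refine h x0 x (fun f hf => ?_) hx0
    have h1 := hi (ef ⟨f, hf⟩)
    rw [← hp] at h1
    simpa [pat] using h1.symm

lemma Dfn.mem {ι κ : Type} {V : Set (κ → ℝ)} (hV : Dfn (fun x => x ∈ V)) {t : κ → (ι → ℝ) → ℝ}
    (ht : ∀ k, IsPoly (t k)) : Dfn (fun x => (fun k => t k x) ∈ V) := hV.subst ht

lemma Dfn.graph {ι : Type} {N : ℕ} {V : Set (Fin N → ℝ)} {f : (Fin N → ℝ) → ℝ}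
    (hf : IsSemialgebraicOn V f) {t : Fin N → (ι → ℝ) → ℝ} (ht : ∀ k, IsPoly (t k))
    {a : (ι → ℝ) → ℝ} (ha : IsPoly a) :
    Dfn (fun x => (fun k => t k x) ∈ V ∧ a x = f (fun k => t k x)) := by
  have := (dfn_of_sa hf).subst (ι := ι)
    (t := fun k x => (Fin.snoc (fun j => t j x) (a x) : Fin (N + 1) → ℝ) k) (by
      intro k
      refine Fin.lastCases ?_ (fun j => ?_) k
      · simpa using ha
      · simpa using ht j)
  refine this.congr (fun x => ?_)
  simp

lemma dfn_closure {N : ℕ} {V : Set (Fin N → ℝ)} (hV : Dfn (fun x => x ∈ V)) :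
    Dfn (fun z => z ∈ closure V) := by
  have : Dfn (fun z : Fin N → ℝ => ∀ ε : ℝ, 0 < ε → ∃ w : Fin N → ℝ, w ∈ V ∧
      ∀ i, w i - z i < ε ∧ z i - w i < ε) := by
    apply Dfn.all1
    apply Dfn.imp
    · exact Dfn.lt (IsPoly.const 0) (IsPoly.coord none)
    apply Dfn.exN (p := fun (v : Option (Fin N) → ℝ) w =>
      w ∈ V ∧ ∀ i, w i - v (some i) < v none ∧ v (some i) - w i < v none)
    apply Dfn.and
    · exact hV.mem (fun k => IsPoly.coord _)
    apply Dfn.iall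
    intro i
    exact (Dfn.lt ((IsPoly.coord _).sub (IsPoly.coord _)) (IsPoly.coord _)).and
      (Dfn.lt ((IsPoly.coord _).sub (IsPoly.coord _)) (IsPoly.coord _))
  refine this.congr (fun z => ?_)
  rw [Metric.mem_closure_iff]
  refine forall_congr' fun ε => forall_congr' fun hε => exists_congr fun w => and_congr_right fun _ => ?_
  rw [dist_pi_lt_iff hε]
  refine forall_congr' fun i => ?_
  rw [Real.dist_eq, abs_lt]
  constructor
  · rintro ⟨h1, h2⟩; constructor <;> linarith
  · rintro ⟨h1, h2⟩; constructor <;> linarith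

end SAlg

namespace SAlg

open Filter

lemma poly_below (A : Polynomial ℝ) (hA : A ≠ 0) :
    ∃ ε c : ℝ, 0 < c ∧ ∀ᶠ t in atTop, c ≤ ε * A.eval t := by
  by_cases hd : A.natDegree = 0
  · obtain ⟨a, rfl⟩ := Polynomial.natDegree_eq_zero.1 hd
    have ha : a ≠ 0 := by rintro rfl; simp at hA
    refine ⟨a, a * a, mul_self_pos.2 ha, Eventually.of_forall fun t => by simp⟩
  · have hs := sign_atTop A (Nat.pos_of_ne_zero hd)
    have hd' : 0 < A.degree := Polynomial.natDegree_pos_iff_degree_pos.1 (Nat.pos_of_ne_zero hd)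
    rcases le_total A.leadingCoeff 0 with h | h
    · refine ⟨-1, 1, one_pos, ?_⟩
      filter_upwards [(A.tendsto_atBot_of_leadingCoeff_nonpos hd' h).eventually
        (eventually_le_atBot (-1))] with t ht
      linarith
    · refine ⟨1, 1, one_pos, ?_⟩
      filter_upwards [(A.tendsto_atTop_of_leadingCoeff_nonneg hd' h).eventually
        (eventually_ge_atTop 1)] with t ht
      linarith

lemma poly_above (A : Polynomial ℝ) :
    ∀ᶠ t in atTop, A.eval t ≤ t ^ (A.natDegree + 1) := by
  have hm : (Polynomial.X ^ (A.natDegree + 1) - A).Monic := by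
    apply Polynomial.monic_X_pow_sub
    exact Polynomial.degree_le_natDegree.trans_lt (by exact_mod_cast Nat.lt_succ_self _)
  have hdeg : (Polynomial.X ^ (A.natDegree + 1) - A).natDegree = A.natDegree + 1 := by
    rw [Polynomial.natDegree_sub_eq_left_of_natDegree_lt] <;> simp
  have h := sign_atTop _ (by rw [hdeg]; omega : 0 < (Polynomial.X ^ (A.natDegree + 1) - A).natDegree)
  rw [hm.leadingCoeff] at h
  filter_upwards [h] with t ht
  rw [sign_one, sign_eq_one_iff] at ht
  simp at ht
  linarith

/-- Evaluation of a bivariate polynomial. -/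
noncomputable def ev2 (P : Polynomial (Polynomial ℝ)) (t s : ℝ) : ℝ :=
  (P.map (Polynomial.evalRingHom t)).eval s

lemma grow (n : ℕ) : ∀ P : Polynomial (Polynomial ℝ), P ≠ 0 → P.natDegree ≤ n →
    ∃ (ε c : ℝ) (m : ℕ), 0 < c ∧ ∀ᶠ t in atTop, ∀ s, t ^ m ≤ s → c ≤ ε * ev2 P t s := by
  induction n with
  | zero =>
    intro P hP hd
    obtain ⟨a, rfl⟩ := Polynomial.natDegree_eq_zero.1 (Nat.le_zero.1 hd)
    have ha : a ≠ 0 := by rintro rfl; simp at hP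
    obtain ⟨ε, c, hc, h⟩ := poly_below a ha
    refine ⟨ε, c, 0, hc, ?_⟩
    filter_upwards [h] with t ht s _
    simpa [ev2] using ht
  | succ n ih =>
    intro P hP hd
    by_cases hQ : P.divX = 0
    · apply ih P hP
      rw [Polynomial.divX_eq_zero_iff.1 hQ]; simp
    obtain ⟨ε, c, m, hc, h⟩ := ih P.divX hQ (by
      rw [Polynomial.natDegree_divX_eq_natDegree_tsub_one]; omega)
    set B : Polynomial ℝ := 1 + Polynomial.C (-ε / c) * P.coeff 0 with hB
    refine ⟨ε, c, max m (B.natDegree + 1), hc, ?_⟩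
    filter_upwards [h, poly_above B, eventually_ge_atTop 1] with t h1 h2 h3 s hs
    have e1 : ev2 P t s = ev2 P.divX t s * s + (P.coeff 0).eval t := by
      conv_lhs => rw [← P.divX_mul_X_add]
      simp [ev2]
    have i1 : t ^ m ≤ s := (pow_le_pow_right₀ h3 (le_max_left _ _)).trans hs
    have i2 : t ^ (B.natDegree + 1) ≤ s := (pow_le_pow_right₀ h3 (le_max_right _ _)).trans hs
    have i3 : 0 ≤ s := le_trans (by positivity) i2
    have i4 : 1 + (-ε / c) * (P.coeff 0).eval t ≤ s := by
      refine le_trans ?_ i2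
      simpa [hB] using h2
    have i5 := h1 s i1
    have i6 : c + (-ε) * (P.coeff 0).eval t ≤ c * s := by
      have := mul_le_mul_of_nonneg_left i4 hc.le
      have e : c * (1 + (-ε / c) * (P.coeff 0).eval t) = c + (-ε) * (P.coeff 0).eval t := by
        field_simp
      linarith
    rw [e1]
    nlinarith [mul_le_mul_of_nonneg_right i5 i3]

lemma grow_sign (P : Polynomial (Polynomial ℝ)) :
    ∃ m : ℕ, ∀ᶠ t in atTop, ∀ s s', t ^ m ≤ s → t ^ m ≤ s' →
      SignType.sign (ev2 P t s) = SignType.sign (ev2 P t s') := by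
  by_cases hP : P = 0
  · subst hP; exact ⟨0, Eventually.of_forall fun t s s' _ _ => by simp [ev2]⟩
  obtain ⟨ε, c, m, hc, h⟩ := grow _ P hP le_rfl
  refine ⟨m, ?_⟩
  filter_upwards [h] with t ht s s' hs hs'
  have h1 := hc.trans_le (ht s hs)
  have h2 := hc.trans_le (ht s' hs')
  rcases lt_trichotomy ε 0 with h0 | h0 | h0
  · rw [sign_neg (neg_of_mul_pos_right h1 h0.le), sign_neg (neg_of_mul_pos_right h2 h0.le)]
  · subst h0; simp at h1
  · rw [sign_pos (pos_of_mul_pos_right h1 h0.le), sign_pos (pos_of_mul_pos_right h2 h0.le)]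

lemma ev2_exists (f : MvPolynomial (Fin 2) ℝ) : ∃ P : Polynomial (Polynomial ℝ),
    ∀ t s : ℝ, eval ![t, s] f = ev2 P t s := by
  refine ⟨aeval ![Polynomial.C Polynomial.X, Polynomial.X] f, fun t s => ?_⟩
  induction f using MvPolynomial.induction_on with
  | C a => simp [ev2, Polynomial.algebraMap_apply]
  | add p q hp hq => rw [map_add, hp, hq]; simp [ev2]
  | mul_X p i hp =>
    rw [map_mul, hp]
    fin_cases i <;> simp [ev2]

lemma Dfn.growth {E : (Fin 2 → ℝ) → Prop} (hE : Dfn E)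
    (hb : ∀ᶠ t in atTop, ∃ B, ∀ s, E ![t, s] → s ≤ B) :
    ∃ m : ℕ, ∀ᶠ t in atTop, ∀ s, E ![t, s] → s ≤ t ^ m := by
  obtain ⟨F, hF, h⟩ := hE
  have hf : ∀ f : MvPolynomial (Fin 2) ℝ, ∃ m : ℕ, ∀ᶠ t in atTop, ∀ s s', t ^ m ≤ s → t ^ m ≤ s' →
      SignType.sign (eval ![t, s] f) = SignType.sign (eval ![t, s'] f) := by
    intro f
    obtain ⟨P, hP⟩ := ev2_exists f
    simp only [hP]
    exact grow_sign P
  choose mf hmf using hf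
  refine ⟨hF.toFinset.sup mf, ?_⟩
  have hall : ∀ᶠ t in atTop, ∀ f ∈ F, ∀ s s', t ^ mf f ≤ s → t ^ mf f ≤ s' →
      SignType.sign (eval ![t, s] f) = SignType.sign (eval ![t, s'] f) :=
    (eventually_all_finite hF).2 fun f _ => hmf f
  filter_upwards [hall, hb, eventually_ge_atTop 1] with t h1 ⟨B, hB⟩ h3 s hs
  by_contra hlt
  push Not at hlt
  have hle : ∀ f ∈ F, t ^ mf f ≤ t ^ hF.toFinset.sup mf := fun f hf =>
    pow_le_pow_right₀ h3 (Finset.le_sup (f := mf) (by simpa using hf))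
  have := hB (max s (B + 1)) (h _ _ (fun f hf => h1 f hf s (max s (B + 1))
    ((hle f hf).trans hlt.le) (((hle f hf).trans hlt.le).trans (le_max_left _ _))) hs)
  linarith [le_max_right s (B + 1)]

end SAlg

namespace SAlg

open Filter Topology

lemma cond_iff {N : ℕ} (z y : Fin N → ℝ) {t : ℝ} (ht : 0 < t) :
    (∀ i, (z i - y i) * t < 1 ∧ (y i - z i) * t < 1) ↔ dist z y < 1 / t := by
  rw [dist_pi_lt_iff (by positivity)]
  refine forall_congr' fun i => ?_
  rw [Real.dist_eq, abs_lt, ← lt_div_iff₀ ht, ← lt_div_iff₀ ht]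
  constructor
  · rintro ⟨h1, h2⟩; constructor <;> linarith
  · rintro ⟨h1, h2⟩; constructor <;> linarith

/-- The relation used to bound `1 / |φ|`. -/
def ERel {N : ℕ} (V : Set (Fin N → ℝ)) (φ ψ : (Fin N → ℝ) → ℝ) (v : Fin 2 → ℝ) : Prop :=
  ∃ y : Fin N → ℝ, ∃ a b : ℝ, (y ∈ V ∧ a = φ y) ∧ (y ∈ V ∧ b = ψ y) ∧
    (∀ i, y i ≤ v 0 ∧ 0 - v 0 ≤ y i) ∧
    (∀ z : Fin N → ℝ, z ∈ closure V →
      (∀ i, (z i - y i) * v 0 < 1 ∧ (y i - z i) * v 0 < 1) → z ∈ V) ∧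
    1 ≤ (b * v 0) ^ 2 ∧ (v 1 * a) ^ 2 = 1

lemma dfn_ERel {N : ℕ} {V : Set (Fin N → ℝ)} {φ ψ : (Fin N → ℝ) → ℝ} (hV : IsSemialgebraic V)
    (hφ : IsSemialgebraicOn V φ) (hψ : IsSemialgebraicOn V ψ) : Dfn (ERel V φ ψ) := by
  have hV' := dfn_of_sa hV
  unfold ERel
  apply Dfn.exN
  apply Dfn.ex1
  apply Dfn.ex1
  refine Dfn.and (Dfn.graph hφ (fun k => IsPoly.coord _) (IsPoly.coord _)) ?_
  refine Dfn.and (Dfn.graph hψ (fun k => IsPoly.coord _) (IsPoly.coord _)) ?_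
  refine Dfn.and (Dfn.iall fun i => Dfn.and (Dfn.le (IsPoly.coord _) (IsPoly.coord _))
    (Dfn.le ((IsPoly.const 0).sub (IsPoly.coord _)) (IsPoly.coord _))) ?_
  refine Dfn.and ?_ (Dfn.and
    (Dfn.le (IsPoly.const 1) (((IsPoly.coord _).mul (IsPoly.coord _)).pow 2))
    (Dfn.eq (((IsPoly.coord _).mul (IsPoly.coord _)).pow 2) (IsPoly.const 1)))
  apply Dfn.allN (p := fun (v : Option (Option (Fin 2 ⊕ Fin N)) → ℝ) z => z ∈ closure V →
      (∀ i, (z i - v (some (some (Sum.inr i)))) * v (some (some (Sum.inl 0))) < 1 ∧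
        (v (some (some (Sum.inr i))) - z i) * v (some (some (Sum.inl 0))) < 1) → z ∈ V)
  refine Dfn.imp ((dfn_closure hV').mem (fun k => IsPoly.coord _))
    (Dfn.imp (Dfn.iall fun i => ?_) (hV'.mem (fun k => IsPoly.coord _)))
  exact (Dfn.lt (((IsPoly.coord _).sub (IsPoly.coord _)).mul (IsPoly.coord _)) (IsPoly.const 1)).and
    (Dfn.lt (((IsPoly.coord _).sub (IsPoly.coord _)).mul (IsPoly.coord _)) (IsPoly.const 1))

lemma ERel_bounded {N : ℕ} {V : Set (Fin N → ℝ)} {φ ψ : (Fin N → ℝ) → ℝ}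
    (hφc : ContinuousOn φ V) (hψc : ContinuousOn ψ V)
    (hz : ∀ x ∈ V, φ x = 0 → ψ x = 0) {t : ℝ} (ht : 0 < t) :
    ∃ B, ∀ s, ERel V φ ψ ![t, s] → s ≤ B := by
  set K : Set (Fin N → ℝ) := {y | y ∈ V ∧ ‖y‖ ≤ t ∧ ∀ z ∈ closure V, dist z y < 1 / t → z ∈ V}
    with hK
  have hKV : K ⊆ V := fun y hy => hy.1
  have ht' : 0 < 1 / t := by positivity
  have hKc : IsClosed K := by
    rw [← closure_subset_iff_isClosed]
    intro y hy
    have hyV : y ∈ closure V := closure_mono hKV hy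
    refine ⟨?_, ?_, ?_⟩
    · obtain ⟨w, hw, hd⟩ := Metric.mem_closure_iff.1 hy _ ht'
      exact hw.2.2 y hyV hd
    · have : K ⊆ {y | ‖y‖ ≤ t} := fun y hy => hy.2.1
      exact (isClosed_le continuous_norm continuous_const).closure_subset_iff.2 this hy
    · intro z hz hd
      obtain ⟨w, hw, hwd⟩ := Metric.mem_closure_iff.1 hy (1 / t - dist z y) (by linarith)
      exact hw.2.2 z hz (by linarith [dist_triangle z y w])
  have hLc : IsClosed (K ∩ (fun y => (ψ y * t) ^ 2) ⁻¹' Set.Ici 1) :=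
    ContinuousOn.preimage_isClosed_of_isClosed
      (((hψc.mono hKV).mul continuousOn_const).pow 2) hKc isClosed_Ici
  set L := K ∩ (fun y => (ψ y * t) ^ 2) ⁻¹' Set.Ici 1 with hL
  have hLcomp : IsCompact L := by
    apply Metric.isCompact_of_isClosed_isBounded hLc
    refine (Metric.isBounded_closedBall (x := (0 : Fin N → ℝ)) (r := t)).subset ?_
    intro y hy
    simpa using hy.1.2.1
  have hELs : ∀ s, ERel V φ ψ ![t, s] → ∃ y ∈ L, (s * φ y) ^ 2 = 1 := by
    rintro s ⟨y, a, b, ⟨hyV, rfl⟩, ⟨-, rfl⟩, h1, h2, h3, h4⟩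
    simp only [Matrix.cons_val_zero, Matrix.cons_val_one] at h1 h2 h3 h4
    refine ⟨y, ⟨⟨hyV, ?_, ?_⟩, h3⟩, h4⟩
    · rw [pi_norm_le_iff_of_nonneg ht.le]
      intro i
      rw [Real.norm_eq_abs, abs_le]
      exact ⟨by linarith [(h1 i).2], (h1 i).1⟩
    · intro z hz hd
      exact h2 z hz ((cond_iff z y ht).2 hd)
  rcases L.eq_empty_or_nonempty with hem | hne
  · refine ⟨0, fun s hs => ?_⟩
    obtain ⟨y, hy, -⟩ := hELs s hs
    rw [hem] at hy; exact absurd hy (Set.notMem_empty y)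
  obtain ⟨y0, hy0, hmin⟩ := hLcomp.exists_isMinOn hne
    (f := fun y => |φ y|) ((hφc.mono (fun y hy => hKV hy.1)).abs)
  have hφ0 : φ y0 ≠ 0 := by
    intro h0
    have h1 : (1 : ℝ) ≤ (ψ y0 * t) ^ 2 := hy0.2
    rw [hz y0 (hKV hy0.1) h0] at h1
    norm_num at h1
  refine ⟨1 / |φ y0|, fun s hs => ?_⟩
  obtain ⟨y, hy, hsy⟩ := hELs s hs
  have h1 : |φ y0| ≤ |φ y| := hmin hy
  have h2 : |s| * |φ y| = 1 := by
    rw [← abs_mul]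
    have h3 : (s * φ y) * (s * φ y) = 1 := by rw [← sq]; exact hsy
    rcases mul_self_eq_one_iff.1 h3 with h | h <;> rw [h] <;> simp
  rw [le_div_iff₀ (abs_pos.2 hφ0)]
  calc s * |φ y0| ≤ |s| * |φ y| :=
        mul_le_mul (le_abs_self s) h1 (abs_nonneg _) (abs_nonneg _)
    _ = 1 := h2

lemma sa_quot {N : ℕ} {V : Set (Fin N → ℝ)} {φ ψ : (Fin N → ℝ) → ℝ}
    (hφ : IsSemialgebraicOn V φ) (hψ : IsSemialgebraicOn V ψ) (n : ℕ) :
    IsSemialgebraicOn V (fun x => ψ x ^ n / φ x) := by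
  apply sa_of_dfn
  have : Dfn (fun v : Fin (N + 1) → ℝ => ∃ a b : ℝ,
      ((fun i : Fin N => v i.castSucc) ∈ V ∧ a = φ (fun i : Fin N => v i.castSucc)) ∧
      ((fun i : Fin N => v i.castSucc) ∈ V ∧ b = ψ (fun i : Fin N => v i.castSucc)) ∧
      ((a = 0 ∧ v (Fin.last N) = 0) ∨ (¬ a = 0 ∧ v (Fin.last N) * a = b ^ n))) := by
    apply Dfn.ex1
    apply Dfn.ex1
    refine Dfn.and (Dfn.graph hφ (fun k => IsPoly.coord _) (IsPoly.coord _)) ?_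
    refine Dfn.and (Dfn.graph hψ (fun k => IsPoly.coord _) (IsPoly.coord _)) ?_
    exact Dfn.or ((Dfn.eq (IsPoly.coord _) (IsPoly.const 0)).and
        (Dfn.eq (IsPoly.coord _) (IsPoly.const 0)))
      ((Dfn.eq (IsPoly.coord _) (IsPoly.const 0)).not.and
        (Dfn.eq ((IsPoly.coord _).mul (IsPoly.coord _)) ((IsPoly.coord _).pow n)))
  refine this.congr (fun v => ?_)
  simp only [Set.mem_ofPred_eq]
  constructor
  · rintro ⟨hv, h⟩
    refine ⟨_, _, ⟨hv, rfl⟩, ⟨hv, rfl⟩, ?_⟩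
    by_cases h0 : φ (fun i : Fin N => v i.castSucc) = 0
    · left; exact ⟨h0, by rw [h, h0, div_zero]⟩
    · right; exact ⟨h0, by rw [h, div_mul_cancel₀ _ h0]⟩
  · rintro ⟨a, b, ⟨hv, rfl⟩, ⟨-, rfl⟩, ⟨h0, h⟩ | ⟨h0, h⟩⟩
    · exact ⟨hv, by rw [h, h0, div_zero]⟩
    · exact ⟨hv, by rw [eq_div_iff h0, h]⟩

end SAlg

theorem stmt13 {N : ℕ} (V : Set (Fin N → ℝ)) (hV : IsLocallyClosed V)
    (hVsa : IsSemialgebraic V) (φ ψ : (Fin N → ℝ) → ℝ)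
    (hφc : ContinuousOn φ V) (hψc : ContinuousOn ψ V)
    (hφsa : IsSemialgebraicOn V φ) (hψsa : IsSemialgebraicOn V ψ)
    (hz : ∀ x ∈ V, φ x = 0 → ψ x = 0) :
    ∃ (n : ℕ) (ρ : (Fin N → ℝ) → ℝ), 0 < n ∧ ContinuousOn ρ V ∧
      IsSemialgebraicOn V ρ ∧ ∀ x ∈ V, ψ x ^ n = ρ x * φ x := by
  have hb : ∀ᶠ t : ℝ in Filter.atTop, ∃ B, ∀ s, SAlg.ERel V φ ψ ![t, s] → s ≤ B := by
    filter_upwards [Filter.eventually_gt_atTop 0] with t ht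
    exact SAlg.ERel_bounded hφc hψc hz ht
  obtain ⟨m, hm⟩ := (SAlg.dfn_ERel hVsa hφsa hψsa).growth hb
  obtain ⟨T, hT⟩ := Filter.eventually_atTop.1 hm
  refine ⟨m + 1, fun x => ψ x ^ (m + 1) / φ x, Nat.succ_pos m, ?_,
    SAlg.sa_quot hφsa hψsa (m + 1), ?_⟩
  swap
  · intro x hx
    by_cases h0 : φ x = 0
    · simp [h0, hz x hx h0]
    · exact (div_mul_cancel₀ _ h0).symm
  intro x hx
  by_cases h0 : φ x = 0
  swap
  · exact ((hψc x hx).pow (m + 1)).div (hφc x hx) h0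
  have hψ0 := hz x hx h0
  obtain ⟨U, Z, hU, hZ, hUZ⟩ := hV
  have hxU : x ∈ U := by rw [hUZ] at hx; exact hx.1
  obtain ⟨r, hr, hrU⟩ := Metric.isOpen_iff.1 hU x hxU
  have hclV : ∀ z ∈ closure V, dist z x < r → z ∈ V := by
    intro z hz hd
    rw [hUZ]
    refine ⟨hrU hd, ?_⟩
    have : V ⊆ Z := by rw [hUZ]; exact Set.inter_subset_right
    exact hZ.closure_subset_iff.2 this hz
  set T0 := max (max T 1) (max (2 / r) (‖x‖ + r)) with hT0
  have hT0pos : 0 < T0 := lt_of_lt_of_le one_pos ((le_max_right T 1).trans (le_max_left _ _))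
  have hbound : ∀ᶠ y in nhdsWithin x V, ‖ψ y ^ (m + 1) / φ y‖ ≤ |ψ y| := by
    have hc : ∀ᶠ y in nhdsWithin x V, |ψ y| < 1 / T0 := by
      have h1 : Filter.Tendsto (fun y => |ψ y|) (nhdsWithin x V) (nhds |ψ x|) := (hψc x hx).abs
      rw [hψ0, abs_zero] at h1
      exact h1.eventually (gt_mem_nhds (by positivity))
    have hball : ∀ᶠ y in nhdsWithin x V, dist y x < r / 2 :=
      mem_nhdsWithin_of_mem_nhds (Metric.ball_mem_nhds x (by positivity))
    filter_upwards [hc, hball, self_mem_nhdsWithin] with y h1 h2 hyV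
    by_cases hψy : ψ y = 0
    · simp [hψy]
    have hφy : φ y ≠ 0 := fun h => hψy (hz y hyV h)
    have hψp : 0 < |ψ y| := abs_pos.2 hψy
    have hφp : 0 < |φ y| := abs_pos.2 hφy
    set t := 1 / |ψ y| with ht
    have htp : 0 < t := by positivity
    have htT : T0 ≤ t := by
      rw [ht, le_div_iff₀ hψp]
      rw [lt_div_iff₀ hT0pos] at h1
      linarith
    have hE : SAlg.ERel V φ ψ ![t, 1 / |φ y|] := by
      refine ⟨y, φ y, ψ y, ⟨hyV, rfl⟩, ⟨hyV, rfl⟩, ?_, ?_, ?_, ?_⟩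
      · intro i
        have hn : ‖y‖ ≤ t := by
          have e1 : ‖y‖ ≤ ‖x‖ + dist y x := by
            rw [dist_eq_norm]
            calc ‖y‖ = ‖x + (y - x)‖ := by congr 1; abel
              _ ≤ _ := norm_add_le _ _
          have e2 : ‖x‖ + r ≤ T0 := (le_max_right _ _).trans (le_max_right _ _)
          linarith
        have hi := (norm_le_pi_norm y i).trans hn
        rw [Real.norm_eq_abs, abs_le] at hi
        simp only [Matrix.cons_val_zero]
        exact ⟨hi.2, by linarith [hi.1]⟩
      · intro z hzc hzy
        simp only [Matrix.cons_val_zero] at hzy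
        have hd := (SAlg.cond_iff z y htp).1 hzy
        have e2 : 2 / r ≤ t := ((le_max_left _ _).trans (le_max_right _ _)).trans htT
        have e3 : 1 / t ≤ r / 2 := by
          rw [div_le_iff₀ hr] at e2
          rw [div_le_iff₀ htp]; linarith
        exact hclV z hzc (by linarith [dist_triangle z y x])
      · simp only [Matrix.cons_val_zero]
        rw [← sq_abs, abs_mul, ht, abs_of_pos (show 0 < 1 / |ψ y| by positivity),
          mul_one_div_cancel hψp.ne']
        norm_num
      · show (1 / |φ y| * φ y) ^ 2 = 1
        rw [← sq_abs, abs_mul, abs_of_pos (show 0 < 1 / |φ y| by positivity),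
          one_div_mul_cancel hφp.ne']
        norm_num
    have hfin := hT t (((le_max_left T 1).trans (le_max_left _ _)).trans htT) _ hE
    rw [Real.norm_eq_abs, abs_div, abs_pow]
    have hfin2 : 1 ≤ t ^ m * |φ y| := by rwa [div_le_iff₀ hφp] at hfin
    have hfin3 : |ψ y| ^ m ≤ |φ y| := by
      rw [ht, one_div, inv_pow] at hfin2
      rw [inv_mul_eq_div, le_div_iff₀ (by positivity)] at hfin2
      linarith
    rw [div_le_iff₀ hφp, pow_succ, mul_comm]
    exact mul_le_mul_of_nonneg_left hfin3 hψp.le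
  have hval : ψ x ^ (m + 1) / φ x = 0 := by rw [h0, div_zero]
  show Filter.Tendsto _ _ (nhds (ψ x ^ (m + 1) / φ x))
  rw [hval]
  apply squeeze_zero_norm' hbound
  have h1 : Filter.Tendsto (fun y => |ψ y|) (nhdsWithin x V) (nhds |ψ x|) := (hψc x hx).abs
  rwa [hψ0, abs_zero] at h1
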